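/- For a smooth function f: ℝ×𝕋² → ℂ satisfying f(x+1,y,t+y) = f(x,y,t), 1-periodicity in y and t, and (2πi)^{-1}∂_t f = n·f with n ≠ 0, there is a unique function f̃: ℝ×ℤ/nℤ → ℂ such that f(x,y,t) = Σ_{k∈ℤ} f̃(x + k/n; k) e^{2πi(ky+nt)} (Weil–Brezin–Zak transform), and the assignment f ↦ f̃ is a linear bijection onto the Schwartz functions on ℝ×ℤ/nℤ. -/

import Mathlib

/-!
A weight-`n` function is `F(x, y) e^{2πint}`, where its slice `F` at `t = 0` is `1`-periodic in
`y` and satisfies `F(x + 1, y) = e^{-2πiny} F(x, y)`. The twisting relation shifts Fourier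
coefficients in `y` by `n`, so that after recentring by `k/n` the `k`-th coefficient `F̃(x; k)`
depends only on `k` mod `n`. The left-invariant fields `X = ∂_x` and `Y = ∂_y + 2πinx` preserve
the twisting relation and act on `F̃` as `d/dx` and as multiplication by `2πinx`. Since
twisted-periodic functions are bounded, all `x^m ∂_x^j F̃` are bounded, that is, `F̃` is Schwartz.
Conversely, `k = n ((x + k/n) - x)` expresses the partial derivatives of a Weil–Brezin–Zak series
through series of the same kind, so the series of a Schwartz family is smooth.
-/

namespace WeilBrezin

open MeasureTheory Function Set Metric
open scoped Real FourierTransform SchwartzMap ContDiff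
open Complex (I)

section FourierChar

lemma fourierChar_intCast (k : ℤ) : 𝐞 (k : ℝ) = 1 := by
  rw [Real.fourierChar_apply', mul_comm, Circle.exp_int_mul_two_pi]

lemma contDiff_fourierChar {m : ℕ∞ω} : ContDiff ℝ m (𝐞 · : ℝ → ℂ) := by
  simp only [Real.fourierChar_apply]
  exact ((Complex.ofRealCLM.contDiff.comp (contDiff_const.mul contDiff_id)).mul
    contDiff_const).cexp

lemma continuous_fourierChar_mul (c : ℝ) : Continuous fun y : ℝ => (𝐞 (c * y) : ℂ) :=
  Real.differentiable_fourierChar.continuous.comp (continuous_const_mul c)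

lemma hasDerivAt_fourierChar_mul (c y : ℝ) :
    HasDerivAt (fun s : ℝ => (𝐞 (c * s) : ℂ)) (2 * π * I * c * 𝐞 (c * y)) y := by
  have h := (Real.hasDerivAt_fourierChar (c * y)).scomp y (hasDerivAt_const_mul c)
  refine h.congr_deriv ?_
  rw [Complex.real_smul]
  ring

lemma fourier_coe_eq_fourierChar (k : ℤ) (y : ℝ) :
    fourier k (y : UnitAddCircle) = (𝐞 (k * y) : ℂ) := by
  rw [fourier_coe_apply, Real.fourierChar_apply]
  push_cast
  ring_nf

end FourierChar

section FourierSeries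

theorem fourierCoeff_tsum {T : ℝ} [Fact (0 < T)] {c : ℤ → ℂ} (hc : Summable c) (k : ℤ) :
    fourierCoeff (fun z : AddCircle T => ∑' j, c j * fourier j z) k = c k := by
  have hint (j : ℤ) : Integrable (fun z : AddCircle T => fourier (-k) z • (c j * fourier j z))
      AddCircle.haarAddCircle :=
    ((fourier (-k)).continuous.smul
      (continuous_const.mul (fourier j).continuous)).integrable_of_hasCompactSupport
        (HasCompactSupport.of_compactSpace _)
  have hnorm : Summable fun j =>
      ∫ z : AddCircle T, ‖fourier (-k) z • (c j * fourier j z)‖ ∂AddCircle.haarAddCircle := by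
    simpa only [norm_smul, norm_mul, fourier_apply, Circle.norm_coe, one_mul, mul_one,
      integral_const, probReal_univ, one_smul] using hc.norm
  have hcoeff (j : ℤ) : fourierCoeff (fun z : AddCircle T => c j * fourier j z) k =
      if j = k then c k else 0 := by
    rw [fourierCoeff.const_mul, fourierCoeff_fourier, Pi.single_apply, mul_ite, mul_one, mul_zero]
    grind
  have hsum := hasSum_integral_of_summable_integral_norm hint hnorm
  change HasSum (fun j => fourierCoeff (fun z : AddCircle T => c j * fourier j z) k) _ at hsum
  simp only [hcoeff, smul_eq_mul, tsum_mul_left] at hsum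
  exact hsum.unique (hasSum_ite_eq k (c k))

lemma fourierCoeffOn_zero_one_eq_integral (φ : ℝ → ℂ) (k : ℤ) :
    fourierCoeffOn one_pos φ k = ∫ y in (0 : ℝ)..1, φ y * 𝐞 (-k * y) := by
  simp only [fourierCoeffOn_eq_integral, fourier_coe_apply, Real.fourierChar_apply, sub_zero,
    div_one, one_smul, smul_eq_mul, mul_comm (φ _)]
  push_cast
  ring_nf

lemma fourierCoeffOn_zero_one_comp_coe (Φ : UnitAddCircle → ℂ) (k : ℤ) :
    fourierCoeffOn one_pos (fun y => Φ y) k = fourierCoeff Φ k := by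
  rw [fourierCoeffOn_zero_one_eq_integral, fourierCoeff_eq_intervalIntegral Φ k 0]
  simp only [zero_add, div_one, one_smul, smul_eq_mul, fourier_coe_eq_fourierChar, mul_comm,
    Int.cast_neg]

theorem fourierCoeffOn_zero_one_tsum {c : ℤ → ℂ} (hc : Summable c) (k : ℤ) :
    fourierCoeffOn one_pos (fun y => ∑' j, c j * 𝐞 (j * y)) k = c k := by
  simp only [← fourier_coe_eq_fourierChar]
  rw [fourierCoeffOn_zero_one_comp_coe (fun z => ∑' j, c j * fourier j z), fourierCoeff_tsum hc]

theorem tsum_fourierCoeffOn_zero_one {φ : ℝ → ℂ} (hcont : Continuous φ) (hper : Periodic φ 1)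
    (hsum : Summable (fourierCoeffOn one_pos φ)) (y : ℝ) :
    ∑' k : ℤ, fourierCoeffOn one_pos φ k * 𝐞 (k * y) = φ y := by
  let Φ : C(UnitAddCircle, ℂ) := ⟨hper.lift, continuous_coinduced_dom.mpr hcont⟩
  have hcoeff : fourierCoeffOn one_pos φ = fourierCoeff Φ :=
    funext (fourierCoeffOn_zero_one_comp_coe Φ)
  have h := has_pointwise_sum_fourier_series_of_summable (f := Φ) (hcoeff ▸ hsum) y
  simp only [← hcoeff, fourier_coe_eq_fourierChar, smul_eq_mul] at h
  exact h.tsum_eq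

lemma fourierCoeffOn_zero_one_sub {φ ψ : ℝ → ℂ} (hφ : IntervalIntegrable φ volume 0 1)
    (hψ : IntervalIntegrable ψ volume 0 1) (k : ℤ) :
    fourierCoeffOn one_pos (fun y => φ y - ψ y) k =
      fourierCoeffOn one_pos φ k - fourierCoeffOn one_pos ψ k := by
  have hchar := (continuous_fourierChar_mul (-k)).continuousOn (s := uIcc 0 1)
  simp only [fourierCoeffOn_zero_one_eq_integral, sub_mul]
  exact intervalIntegral.integral_sub (hφ.mul_continuousOn hchar) (hψ.mul_continuousOn hchar)

lemma norm_fourierCoeffOn_zero_one_le {φ : ℝ → ℂ} {C : ℝ} (hφ : ∀ y, ‖φ y‖ ≤ C) (k : ℤ) :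
    ‖fourierCoeffOn one_pos φ k‖ ≤ C := by
  rw [fourierCoeffOn_zero_one_eq_integral]
  simpa using intervalIntegral.norm_integral_le_of_norm_le_const (a := 0) (b := 1)
    (f := fun y => φ y * 𝐞 (-k * y)) fun y _ => by simpa [Circle.norm_coe] using hφ y

theorem fourierCoeffOn_zero_one_of_hasDerivAt {φ φ' : ℝ → ℂ} (hφ : ∀ y, HasDerivAt φ (φ' y) y)
    (hφ' : IntervalIntegrable φ' volume 0 1) (h01 : φ 1 = φ 0) (k : ℤ) :
    fourierCoeffOn one_pos φ' k = 2 * π * I * k * fourierCoeffOn one_pos φ k := by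
  have hparts := intervalIntegral.integral_mul_deriv_eq_deriv_mul
    (fun y _ => hasDerivAt_fourierChar_mul (-k) y) (fun y _ => hφ y)
    ((continuous_const.mul (continuous_fourierChar_mul (-k))).intervalIntegrable 0 1) hφ'
  have hend : 𝐞 (-k * 1 : ℝ) = 1 := by rw [mul_one, ← Int.cast_neg, fourierChar_intCast]
  simp only [hend, mul_zero, AddChar.map_zero_eq_one, h01, sub_self, zero_sub] at hparts
  simp only [fourierCoeffOn_zero_one_eq_integral, mul_comm (φ' _), hparts,
    ← intervalIntegral.integral_const_mul, ← intervalIntegral.integral_neg]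
  congr 1 with y
  push_cast
  ring

end FourierSeries

theorem hasDerivAt_intervalIntegral_of_continuous {E : Type*} [NormedAddCommGroup E]
    [NormedSpace ℝ E] {G G' : ℝ → ℝ → E} {a b : ℝ} (hG : ∀ x, Continuous (G x))
    (hG' : Continuous ↿G') (hderiv : ∀ x y, HasDerivAt (fun s => G s y) (G' x y) x) (x : ℝ) :
    HasDerivAt (fun s => ∫ y in a..b, G s y) (∫ y in a..b, G' x y) x := by
  obtain ⟨C, hC⟩ := ((isCompact_closedBall x 1).prod
    (isCompact_uIcc (a := a) (b := b))).exists_bound_of_continuousOn hG'.continuousOn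
  refine (intervalIntegral.hasDerivAt_integral_of_dominated_loc_of_deriv_le (bound := fun _ => C)
    (closedBall_mem_nhds x one_pos) (.of_forall fun s => (hG s).aestronglyMeasurable)
    ((hG x).intervalIntegrable a b)
    (hG'.comp (.prodMk continuous_const continuous_id)).aestronglyMeasurable
    (.of_forall fun y hy s hs => hC (s, y) ⟨hs, uIoc_subset_uIcc hy⟩)
    intervalIntegrable_const (.of_forall fun y _ s _ => hderiv s y)).2

section ZakSum

lemma summable_one_div_one_add_abs_sq : Summable fun k : ℤ => 1 / (1 + |(k : ℝ)|) ^ 2 := by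
  refine Summable.of_norm_bounded_eventually
    (Real.summable_one_div_int_pow.2 one_lt_two) ?_
  filter_upwards [(Set.finite_singleton (0 : ℤ)).compl_mem_cofinite] with k hk
  have hk' : 0 < |(k : ℝ)| := by simpa using hk
  rw [Real.norm_of_nonneg (by positivity), ← sq_abs (k : ℝ)]
  gcongr
  linarith

theorem exists_forall_one_add_pow_mul_norm_le {ι E F : Type*} [NormedAddCommGroup E]
    [NormedSpace ℝ E] [NormedAddCommGroup F] [NormedSpace ℝ F] {g : ι → 𝓢(E, F)}
    (hg : (range g).Finite) (m : ℕ) : ∃ C, ∀ i u, (1 + ‖u‖) ^ m * ‖g i u‖ ≤ C := by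
  let q (f : 𝓢(E, F)) : ℝ :=
    2 ^ m * (Finset.Iic (m, 0)).sup (fun l => SchwartzMap.seminorm ℝ l.1 l.2) f
  obtain ⟨C, hC⟩ := (hg.image q).bddAbove
  refine ⟨C, fun i u => le_trans ?_ (hC (mem_image_of_mem q (mem_range_self i)))⟩
  simpa only [norm_iteratedFDeriv_zero] using
    SchwartzMap.one_add_le_sup_seminorm_apply (𝕜 := ℝ) (m := (m, 0)) le_rfl le_rfl (g i) u

lemma finite_range_of_periodic {α : Type*} {g : ℤ → α} {n : ℤ} (hn : n ≠ 0) (hg : Periodic g n) :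
    (range g).Finite :=
  hg.image_uIcc hn 0 ▸ (finite_uIcc 0 (0 + n)).image g

/-- The `k`-th term `g_k(x + k/n) e^{2πiky}` of the Weil–Brezin–Zak series, without the central
factor `e^{2πint}`. -/
noncomputable def zakTerm (n : ℤ) (g : ℤ → 𝓢(ℝ, ℂ)) (k : ℤ) (p : ℝ × ℝ) : ℂ :=
  g k (p.1 + k / n) * 𝐞 (k * p.2)

/-- The Weil–Brezin–Zak series of a family of Schwartz functions, restricted to the slice `t = 0`
of the Heisenberg group. -/
noncomputable def zakSum (n : ℤ) (g : ℤ → 𝓢(ℝ, ℂ)) (p : ℝ × ℝ) : ℂ :=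
  ∑' k, zakTerm n g k p

/-- Multiplication by the coordinate `x` on Schwartz functions. -/
noncomputable def mulCoordCLM : 𝓢(ℝ, ℂ) →L[ℝ] 𝓢(ℝ, ℂ) :=
  SchwartzMap.smulLeftCLM ℂ fun x : ℝ => x

lemma mulCoordCLM_apply (f : 𝓢(ℝ, ℂ)) (x : ℝ) : mulCoordCLM f x = x * f x := by
  rw [mulCoordCLM, SchwartzMap.smulLeftCLM_apply_apply (by fun_prop), Complex.real_smul]

variable {n : ℤ} {g : ℤ → 𝓢(ℝ, ℂ)}

lemma norm_zakTerm (k : ℤ) (p : ℝ × ℝ) : ‖zakTerm n g k p‖ = ‖g k (p.1 + k / n)‖ := by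
  rw [zakTerm, norm_mul, Circle.norm_coe, mul_one]

lemma one_add_abs_le_mul_one_add_abs_add_div (hn : n ≠ 0) {R x : ℝ} (hx : |x| ≤ R) (k : ℤ) :
    1 + |(k : ℝ)| ≤ |(n : ℝ)| * (1 + R) * (1 + |x + k / n|) := by
  have hn₁ : 1 ≤ |(n : ℝ)| := mod_cast Int.one_le_abs hn
  have hn₀ : (n : ℝ) ≠ 0 := mod_cast hn
  have hR : 0 ≤ R := (abs_nonneg x).trans hx
  have hk : |(k : ℝ)| ≤ |(n : ℝ)| * (|x + k / n| + R) := by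
    calc |(k : ℝ)| = |(n : ℝ)| * |x + k / n - x| := by
          rw [← abs_mul, add_sub_cancel_left, mul_div_cancel₀ _ hn₀]
      _ ≤ |(n : ℝ)| * (|x + k / n| + R) := by
          gcongr
          exact (abs_sub _ _).trans (by gcongr)
  have : 0 ≤ |(n : ℝ)| * (R * |x + k / n|) := by positivity
  linarith

theorem exists_forall_pow_mul_norm_zakTerm_le (hn : n ≠ 0) (hg : Periodic g n) (m : ℕ) (R : ℝ) :
    ∃ C, ∀ (k : ℤ) p, ‖p‖ ≤ R →
      |(k : ℝ)| ^ m * ‖zakTerm n g k p‖ ≤ C * (1 / (1 + |(k : ℝ)|) ^ 2) := by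
  obtain ⟨C, hC⟩ := exists_forall_one_add_pow_mul_norm_le (finite_range_of_periodic hn hg) (m + 2)
  refine ⟨(|(n : ℝ)| * (1 + R)) ^ (m + 2) * C, fun k p hp => ?_⟩
  have hR : 0 ≤ R := (norm_nonneg p).trans hp
  have hk := one_add_abs_le_mul_one_add_abs_add_div hn ((norm_fst_le p).trans hp) k
  rw [norm_zakTerm, mul_one_div, le_div_iff₀ (by positivity)]
  set u := p.1 + k / n
  calc |(k : ℝ)| ^ m * ‖g k u‖ * (1 + |(k : ℝ)|) ^ 2
      ≤ (1 + |(k : ℝ)|) ^ m * ‖g k u‖ * (1 + |(k : ℝ)|) ^ 2 := by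
        gcongr
        exact le_add_of_nonneg_left zero_le_one
    _ = (1 + |(k : ℝ)|) ^ (m + 2) * ‖g k u‖ := by ring
    _ ≤ (|(n : ℝ)| * (1 + R) * (1 + |u|)) ^ (m + 2) * ‖g k u‖ := by gcongr
    _ = (|(n : ℝ)| * (1 + R)) ^ (m + 2) * ((1 + ‖u‖) ^ (m + 2) * ‖g k u‖) := by
        rw [mul_pow (_ * _), mul_assoc, Real.norm_eq_abs]
    _ ≤ (|(n : ℝ)| * (1 + R)) ^ (m + 2) * C := by gcongr; exact hC k u

lemma summable_zakTerm (hn : n ≠ 0) (hg : Periodic g n) (p : ℝ × ℝ) :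
    Summable fun k => zakTerm n g k p := by
  obtain ⟨C, hC⟩ := exists_forall_pow_mul_norm_zakTerm_le hn hg 0 ‖p‖
  exact .of_norm_bounded (summable_one_div_one_add_abs_sq.mul_left C) fun k => by
    simpa using hC k p le_rfl

lemma intCast_mul_zakTerm (hn : n ≠ 0) (k : ℤ) (p : ℝ × ℝ) :
    k * zakTerm n g k p = n * (zakTerm n (mulCoordCLM ∘ g) k p - p.1 * zakTerm n g k p) := by
  have hn' : (n : ℂ) ≠ 0 := mod_cast hn
  simp only [zakTerm, comp_apply, mulCoordCLM_apply]
  push_cast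
  field_simp
  ring

theorem hasSum_intCast_mul_zakTerm (hn : n ≠ 0) (hg : Periodic g n) (p : ℝ × ℝ) :
    HasSum (fun k : ℤ => k * zakTerm n g k p)
      (n * (zakSum n (mulCoordCLM ∘ g) p - p.1 * zakSum n g p)) := by
  simp only [intCast_mul_zakTerm hn]
  exact ((summable_zakTerm hn (hg.comp mulCoordCLM) p).hasSum.sub
    ((summable_zakTerm hn hg p).hasSum.mul_left (p.1 : ℂ))).mul_left (n : ℂ)

open ContinuousLinearMap

/-- The derivative of `zakTerm n g k` at `p`. -/
noncomputable def zakTermFDeriv (n : ℤ) (g : ℤ → 𝓢(ℝ, ℂ)) (k : ℤ) (p : ℝ × ℝ) :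
    ℝ × ℝ →L[ℝ] ℂ :=
  (fst ℝ ℝ ℝ).smulRight (zakTerm n (SchwartzMap.derivCLM ℝ ℂ ∘ g) k p) +
    (snd ℝ ℝ ℝ).smulRight (2 * π * I * (k * zakTerm n g k p))

lemma hasFDerivAt_zakTerm (k : ℤ) (p : ℝ × ℝ) :
    HasFDerivAt (zakTerm n g k) (zakTermFDeriv n g k p) p := by
  have hfst : HasFDerivAt (fun q : ℝ × ℝ => g k (q.1 + k / n)) _ p :=
    (((g k).differentiableAt (x := p.1 + k / n)).hasDerivAt.comp_add_const p.1
      (k / n : ℝ)).hasFDerivAt.comp p hasFDerivAt_fst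
  have hsnd : HasFDerivAt (fun q : ℝ × ℝ => (𝐞 (k * q.2) : ℂ)) _ p :=
    (hasDerivAt_fourierChar_mul k p.2).hasFDerivAt.comp p hasFDerivAt_snd
  refine (hfst.mul hsnd).congr_fderiv ?_
  ext <;> simp [zakTerm, zakTermFDeriv] <;> ring

lemma norm_zakTermFDeriv_le (k : ℤ) (p : ℝ × ℝ) :
    ‖zakTermFDeriv n g k p‖ ≤ ‖zakTerm n (SchwartzMap.derivCLM ℝ ℂ ∘ g) k p‖ +
      2 * π * (|(k : ℝ)| * ‖zakTerm n g k p‖) := by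
  refine (norm_add_le _ _).trans (add_le_add ?_ ?_)
  · rw [norm_smulRight_apply]
    exact mul_le_of_le_one_left (norm_nonneg _) (norm_fst_le ℝ ℝ ℝ)
  · rw [norm_smulRight_apply]
    refine (mul_le_of_le_one_left (norm_nonneg _) (norm_snd_le ℝ ℝ ℝ)).trans_eq ?_
    simp [abs_of_pos Real.pi_pos]

lemma exists_summable_forall_norm_zakTermFDeriv_le (hn : n ≠ 0) (hg : Periodic g n) (R : ℝ) :
    ∃ u : ℤ → ℝ, Summable u ∧ ∀ k p, ‖p‖ ≤ R → ‖zakTermFDeriv n g k p‖ ≤ u k := by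
  obtain ⟨C₁, hC₁⟩ :=
    exists_forall_pow_mul_norm_zakTerm_le hn (hg.comp (SchwartzMap.derivCLM ℝ ℂ)) 0 R
  obtain ⟨C₂, hC₂⟩ := exists_forall_pow_mul_norm_zakTerm_le hn hg 1 R
  simp only [pow_zero, one_mul, pow_one] at hC₁ hC₂
  refine ⟨_, (summable_one_div_one_add_abs_sq.mul_left C₁).add
    ((summable_one_div_one_add_abs_sq.mul_left C₂).mul_left (2 * π)), fun k p hp => ?_⟩
  refine (norm_zakTermFDeriv_le k p).trans (add_le_add (hC₁ k p hp) ?_)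
  exact mul_le_mul_of_nonneg_left (hC₂ k p hp) Real.two_pi_pos.le

theorem hasFDerivAt_zakSum (hn : n ≠ 0) (hg : Periodic g n) (p : ℝ × ℝ) :
    HasFDerivAt (zakSum n g)
      ((fst ℝ ℝ ℝ).smulRight (zakSum n (SchwartzMap.derivCLM ℝ ℂ ∘ g) p) +
        (snd ℝ ℝ ℝ).smulRight
          (2 * π * I * (n * (zakSum n (mulCoordCLM ∘ g) p - p.1 * zakSum n g p)))) p := by
  obtain ⟨u, hu, hbound⟩ := exists_summable_forall_norm_zakTermFDeriv_le hn hg (‖p‖ + 1)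
  have hderiv := hasFDerivAt_tsum_of_isPreconnected hu isOpen_ball
    (convex_ball p 1).isPreconnected (fun k q _ => hasFDerivAt_zakTerm k q)
    (fun k q hq => hbound k q (norm_lt_of_mem_ball hq).le)
    (mem_ball_self one_pos) (summable_zakTerm hn hg p) (mem_ball_self one_pos)
  have hfst := (summable_zakTerm hn (hg.comp (SchwartzMap.derivCLM ℝ ℂ)) p).hasSum
  have hsnd := (hasSum_intCast_mul_zakTerm hn hg p).mul_left (2 * π * I)
  exact hderiv.congr_fderiv (((smulRightL ℝ (ℝ × ℝ) ℂ (fst ℝ ℝ ℝ)).hasSum hfst).add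
    ((smulRightL ℝ (ℝ × ℝ) ℂ (snd ℝ ℝ ℝ)).hasSum hsnd)).tsum_eq

theorem contDiff_zakSum (hn : n ≠ 0) (hg : Periodic g n) : ContDiff ℝ ∞ (zakSum n g) := by
  refine contDiff_infty.2 fun m => ?_
  induction m generalizing g with
  | zero =>
    exact contDiff_zero.2
      (continuous_iff_continuousAt.2 fun p => (hasFDerivAt_zakSum hn hg p).continuousAt)
  | succ m ih =>
    refine contDiff_succ_iff_hasFDerivAt.2 ⟨_, ?_, hasFDerivAt_zakSum hn hg⟩
    have hfst : ContDiff ℝ m fun p : ℝ × ℝ => (p.1 : ℂ) :=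
      Complex.ofRealCLM.contDiff.comp contDiff_fst
    exact (contDiff_const.smulRight (ih (hg.comp _))).add (contDiff_const.smulRight
      (contDiff_const.mul (contDiff_const.mul ((ih (hg.comp _)).sub (hfst.mul (ih hg))))))

end ZakSum

section TwistedPeriodic

/-- Smooth functions on `ℝ × ℝ` transforming like the restriction to the slice `t = 0` of a
weight-`n` function on the Heisenberg nilmanifold. -/
structure IsTwistedPeriodic (n : ℤ) (F : ℝ × ℝ → ℂ) : Prop where
  contDiff : ContDiff ℝ ∞ F
  add_one_fst : ∀ x y, F (x + 1, y) = 𝐞 (-n * y) * F (x, y)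
  add_one_snd : ∀ x y, F (x, y + 1) = F (x, y)

/-- The left-invariant field `∂_x` of the Heisenberg group, acting on the slice `t = 0`. -/
noncomputable def derivX (F : ℝ × ℝ → ℂ) (p : ℝ × ℝ) : ℂ :=
  fderiv ℝ F p (1, 0)

/-- The left-invariant field `∂_y + x ∂_t` of the Heisenberg group, acting on the slice `t = 0` of
weight-`n` functions, where `∂_t` is multiplication by `2πin`. -/
noncomputable def derivY (n : ℤ) (F : ℝ × ℝ → ℂ) (p : ℝ × ℝ) : ℂ :=
  fderiv ℝ F p (0, 1) + 2 * π * I * n * p.1 * F p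

variable {n : ℤ} {g : ℤ → 𝓢(ℝ, ℂ)} {F : ℝ × ℝ → ℂ}

lemma zakTerm_add_one_fst (hn : n ≠ 0) (hg : Periodic g n) (k : ℤ) (x y : ℝ) :
    zakTerm n g k (x + 1, y) = 𝐞 (-n * y) * zakTerm n g (k + n) (x, y) := by
  have hn' : (n : ℝ) ≠ 0 := mod_cast hn
  have hshift : x + ((k + n : ℤ) : ℝ) / n = x + 1 + k / n := by
    push_cast
    field_simp
    ring
  have hchar : (k * y : ℝ) = -n * y + (k + n : ℤ) * y := by
    push_cast
    ring
  simp only [zakTerm]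
  rw [hshift, hg k, hchar, AddChar.map_add_eq_mul, Circle.coe_mul]
  ring

lemma zakTerm_add_one_snd (k : ℤ) (x y : ℝ) :
    zakTerm n g k (x, y + 1) = zakTerm n g k (x, y) := by
  simp only [zakTerm, mul_add, mul_one, AddChar.map_add_eq_mul, fourierChar_intCast]

theorem isTwistedPeriodic_zakSum (hn : n ≠ 0) (hg : Periodic g n) :
    IsTwistedPeriodic n (zakSum n g) where
  contDiff := contDiff_zakSum hn hg
  add_one_fst x y := by
    simp only [zakSum, zakTerm_add_one_fst hn hg, tsum_mul_left]
    exact congrArg _ ((Equiv.addRight n).tsum_eq fun k => zakTerm n g k (x, y))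
  add_one_snd x y := tsum_congr fun k => zakTerm_add_one_snd k x y

lemma hasDerivAt_derivX (hF : Differentiable ℝ F) (x y : ℝ) :
    HasDerivAt (fun s => F (s, y)) (derivX F (x, y)) x :=
  (hF (x, y)).hasFDerivAt.comp_hasDerivAt x ((hasDerivAt_id x).prodMk (hasDerivAt_const x y))

lemma hasDerivAt_derivY (n : ℤ) (hF : Differentiable ℝ F) (x y : ℝ) :
    HasDerivAt (fun s => F (x, s)) (derivY n F (x, y) - 2 * π * I * n * x * F (x, y)) y := by
  rw [derivY, add_sub_cancel_right]
  exact (hF (x, y)).hasFDerivAt.comp_hasDerivAt y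
    ((hasDerivAt_const y x).prodMk (hasDerivAt_id y))

namespace IsTwistedPeriodic

lemma differentiable (hF : IsTwistedPeriodic n F) : Differentiable ℝ F :=
  hF.contDiff.differentiable (by simp)

lemma periodic_snd (hF : IsTwistedPeriodic n F) (x : ℝ) : Periodic (fun y => F (x, y)) 1 :=
  hF.add_one_snd x

lemma continuous_slice (hF : IsTwistedPeriodic n F) (x : ℝ) : Continuous fun y => F (x, y) :=
  hF.contDiff.continuous.comp (.prodMk_right x)

theorem exists_norm_le (hF : IsTwistedPeriodic n F) : ∃ C, ∀ p, ‖F p‖ ≤ C := by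
  obtain ⟨C, hC⟩ := (isCompact_Icc (a := ((0, 0) : ℝ × ℝ))
    (b := (1, 1))).exists_bound_of_continuousOn hF.contDiff.continuous.continuousOn
  refine ⟨C, fun (x, y) => ?_⟩
  have hx : Periodic (fun s => ‖F (s, y)‖) 1 := fun s => by
    simp only [hF.add_one_fst, norm_mul, Circle.norm_coe, one_mul]
  obtain ⟨x', hx', hxx'⟩ := hx.exists_mem_Ico₀ one_pos x
  obtain ⟨y', hy', hyy'⟩ := (hF.periodic_snd x').exists_mem_Ico₀ one_pos y
  calc ‖F (x, y)‖ = ‖F (x', y)‖ := hxx'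
    _ = ‖F (x', y')‖ := congrArg norm hyy'
    _ ≤ C := hC _ ⟨⟨hx'.1, hy'.1⟩, ⟨hx'.2.le, hy'.2.le⟩⟩

protected theorem derivX (hF : IsTwistedPeriodic n F) : IsTwistedPeriodic n (derivX F) where
  contDiff := (hF.contDiff.fderiv_right le_rfl).clm_apply contDiff_const
  add_one_fst x y := by
    have hleft := (hasDerivAt_derivX hF.differentiable (x + 1) y).comp_add_const x 1
    simp only [hF.add_one_fst] at hleft
    exact hleft.unique ((hasDerivAt_derivX hF.differentiable x y).const_mul _)
  add_one_snd x y := by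
    have hleft := hasDerivAt_derivX hF.differentiable x (y + 1)
    simp only [hF.add_one_snd] at hleft
    exact hleft.unique (hasDerivAt_derivX hF.differentiable x y)

protected theorem derivY (hF : IsTwistedPeriodic n F) : IsTwistedPeriodic n (derivY n F) where
  contDiff := ((hF.contDiff.fderiv_right le_rfl).clm_apply contDiff_const).add
    ((contDiff_const.mul (Complex.ofRealCLM.contDiff.comp contDiff_fst)).mul hF.contDiff)
  add_one_fst x y := by
    have hleft := hasDerivAt_derivY n hF.differentiable (x + 1) y
    simp only [hF.add_one_fst] at hleft
    have h := hleft.unique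
      ((hasDerivAt_fourierChar_mul (-n) y).mul (hasDerivAt_derivY n hF.differentiable x y))
    rw [sub_eq_iff_eq_add] at h
    rw [h]
    push_cast
    ring
  add_one_snd x y := by
    have hleft := (hasDerivAt_derivY n hF.differentiable x (y + 1)).comp_add_const y 1
    simp only [hF.add_one_snd] at hleft
    exact sub_left_injective (hleft.unique (hasDerivAt_derivY n hF.differentiable x y))

lemma iterate_derivX (hF : IsTwistedPeriodic n F) (j : ℕ) : IsTwistedPeriodic n (derivX^[j] F) :=
  Iterate.rec _ hF (fun _ => IsTwistedPeriodic.derivX) j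

lemma iterate_derivY (hF : IsTwistedPeriodic n F) (m : ℕ) :
    IsTwistedPeriodic n ((derivY n)^[m] F) :=
  Iterate.rec _ hF (fun _ => IsTwistedPeriodic.derivY) m

end IsTwistedPeriodic

end TwistedPeriodic

section ZakCoeff

/-- The Weil–Brezin–Zak transform `F̃(x; k)`: the `k`-th Fourier coefficient of `F` in the second
variable, recentred by `k/n` so as to become `n`-periodic in `k`. -/
noncomputable def zakCoeff (n : ℤ) (F : ℝ × ℝ → ℂ) (k : ℤ) (x : ℝ) : ℂ :=
  fourierCoeffOn one_pos (fun y => F (x - k / n, y)) k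

variable {n : ℤ} {g : ℤ → 𝓢(ℝ, ℂ)} {F : ℝ × ℝ → ℂ}

theorem zakCoeff_zakSum (hn : n ≠ 0) (hg : Periodic g n) (k : ℤ) (x : ℝ) :
    zakCoeff n (zakSum n g) k x = g k x := by
  set u := x - k / n with hu
  have hsum : Summable fun j : ℤ => g j (u + j / n) := by
    simpa [zakTerm] using summable_zakTerm hn hg (u, 0)
  have h := fourierCoeffOn_zero_one_tsum hsum k
  rwa [hu, sub_add_cancel] at h

namespace IsTwistedPeriodic

lemma zakCoeff_add (hn : n ≠ 0) (hF : IsTwistedPeriodic n F) (k : ℤ) :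
    zakCoeff n F (k + n) = zakCoeff n F k := by
  have hn' : (n : ℝ) ≠ 0 := mod_cast hn
  ext x
  have hshift : x - k / n = x - (k + n : ℤ) / n + 1 := by
    push_cast
    field_simp
    ring
  simp only [zakCoeff, fourierCoeffOn_zero_one_eq_integral, hshift, hF.add_one_fst]
  congr 1 with y
  have hchar : (-(k + n : ℤ) * y : ℝ) = -n * y + -k * y := by
    push_cast
    ring
  rw [hchar, AddChar.map_add_eq_mul, Circle.coe_mul]
  ring

lemma exists_norm_zakCoeff_le (hF : IsTwistedPeriodic n F) :
    ∃ C, ∀ k x, ‖zakCoeff n F k x‖ ≤ C := by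
  obtain ⟨C, hC⟩ := hF.exists_norm_le
  exact ⟨C, fun k x => norm_fourierCoeffOn_zero_one_le (fun y => hC (x - k / n, y)) k⟩

theorem hasDerivAt_zakCoeff (hF : IsTwistedPeriodic n F) (k : ℤ) (x : ℝ) :
    HasDerivAt (zakCoeff n F k) (zakCoeff n (derivX F) k x) x := by
  have hF' : Continuous ↿fun s y : ℝ => derivX F (s, y) * 𝐞 (-k * y) :=
    hF.derivX.contDiff.continuous.mul ((continuous_fourierChar_mul (-k)).comp continuous_snd)
  have h := (hasDerivAt_intervalIntegral_of_continuous (a := 0) (b := 1)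
    (G := fun s y => F (s, y) * 𝐞 (-k * y))
    (fun s => (hF.continuous_slice s).mul (continuous_fourierChar_mul (-k))) hF'
    (fun s y => (hasDerivAt_derivX hF.differentiable s y).mul_const _)
    (x - k / n)).comp_sub_const x (k / n : ℝ)
  simp only [← fourierCoeffOn_zero_one_eq_integral] at h
  exact h

theorem zakCoeff_derivY (hn : n ≠ 0) (hF : IsTwistedPeriodic n F) (k : ℤ) (x : ℝ) :
    zakCoeff n (derivY n F) k x = 2 * π * I * n * x * zakCoeff n F k x := by
  have hn' : (n : ℂ) ≠ 0 := mod_cast hn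
  set u := x - k / n with hu
  have hx : (x : ℂ) = u + k / n := by
    rw [hu]
    push_cast
    ring
  have hY := (hF.derivY.continuous_slice u).intervalIntegrable 0 1 (μ := volume)
  have hcF := ((hF.continuous_slice u).const_mul (2 * π * I * n * u)).intervalIntegrable 0 1
    (μ := volume)
  have hparts := fourierCoeffOn_zero_one_of_hasDerivAt
    (fun y => hasDerivAt_derivY n hF.differentiable u y)
    (hY.sub hcF) (hF.periodic_snd u).eq k
  rw [fourierCoeffOn_zero_one_sub hY hcF, fourierCoeffOn.const_mul, sub_eq_iff_eq_add] at hparts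
  change fourierCoeffOn one_pos (fun y => derivY n F (u, y)) k =
    _ * fourierCoeffOn one_pos (fun y => F (u, y)) k
  rw [hparts, hx]
  field_simp
  ring

lemma zakCoeff_iterate_derivY (hn : n ≠ 0) (hF : IsTwistedPeriodic n F) (m : ℕ) (k : ℤ) (x : ℝ) :
    zakCoeff n ((derivY n)^[m] F) k x = (2 * π * I * n * x) ^ m * zakCoeff n F k x := by
  induction m with
  | zero => simp
  | succ m ih =>
    rw [iterate_succ_apply', (hF.iterate_derivY m).zakCoeff_derivY hn, ih, pow_succ',
      ← mul_assoc]

lemma iteratedDeriv_zakCoeff (hF : IsTwistedPeriodic n F) (j : ℕ) (k : ℤ) :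
    iteratedDeriv j (zakCoeff n F k) = zakCoeff n (derivX^[j] F) k := by
  induction j with
  | zero => rfl
  | succ j ih =>
    rw [iteratedDeriv_succ, ih, iterate_succ_apply']
    exact funext fun x => ((hF.iterate_derivX j).hasDerivAt_zakCoeff k x).deriv

lemma contDiff_zakCoeff (hF : IsTwistedPeriodic n F) (k : ℤ) : ContDiff ℝ ∞ (zakCoeff n F k) :=
  contDiff_of_differentiable_iteratedDeriv fun j _ => by
    rw [hF.iteratedDeriv_zakCoeff]
    exact fun x => ((hF.iterate_derivX j).hasDerivAt_zakCoeff k x).differentiableAt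

theorem exists_pow_mul_norm_zakCoeff_le (hn : n ≠ 0) (hF : IsTwistedPeriodic n F) (m : ℕ) (k : ℤ) :
    ∃ C, ∀ x, ‖x‖ ^ m * ‖zakCoeff n F k x‖ ≤ C := by
  obtain ⟨C, hC⟩ := (hF.iterate_derivY m).exists_norm_zakCoeff_le
  have hone : 1 ≤ ‖(2 * π * I * n : ℂ)‖ := by
    have hn₁ : 1 ≤ |(n : ℝ)| := mod_cast Int.one_le_abs hn
    have hπ : 1 ≤ 2 * π := by linarith [Real.pi_gt_three]
    simpa [abs_of_pos Real.pi_pos] using one_le_mul_of_one_le_of_one_le hπ hn₁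
  refine ⟨C, fun x => ?_⟩
  calc ‖x‖ ^ m * ‖zakCoeff n F k x‖
      ≤ (‖(2 * π * I * n : ℂ)‖ * ‖x‖) ^ m * ‖zakCoeff n F k x‖ := by
        gcongr
        exact le_mul_of_one_le_left (norm_nonneg x) hone
    _ = ‖zakCoeff n ((derivY n)^[m] F) k x‖ := by
        rw [hF.zakCoeff_iterate_derivY hn, norm_mul (_ ^ _), norm_pow, norm_mul _ (x : ℂ),
          Complex.norm_real]
    _ ≤ C := hC k x

/-- The Weil–Brezin–Zak transform of a twisted-periodic function, as a family of Schwartz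
functions. -/
noncomputable def zakTransform (hn : n ≠ 0) (hF : IsTwistedPeriodic n F) (k : ℤ) : 𝓢(ℝ, ℂ) where
  toFun := zakCoeff n F k
  smooth' := hF.contDiff_zakCoeff k
  decay' m j := by
    simpa only [norm_iteratedFDeriv_eq_norm_iteratedDeriv, hF.iteratedDeriv_zakCoeff] using
      (hF.iterate_derivX j).exists_pow_mul_norm_zakCoeff_le hn m k

lemma periodic_zakTransform (hn : n ≠ 0) (hF : IsTwistedPeriodic n F) :
    Periodic (hF.zakTransform hn) n := fun k =>
  DFunLike.coe_injective (hF.zakCoeff_add hn k)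

theorem zakSum_zakTransform (hn : n ≠ 0) (hF : IsTwistedPeriodic n F) :
    zakSum n (hF.zakTransform hn) = F := by
  ext ⟨x, y⟩
  have hcoeff (k : ℤ) : hF.zakTransform hn k (x + k / n) =
      fourierCoeffOn one_pos (fun y => F (x, y)) k := by
    change zakCoeff n F k (x + k / n) = _
    rw [zakCoeff, add_sub_cancel_right]
  have hsum := summable_zakTerm hn (hF.periodic_zakTransform hn) (x, 0)
  simp only [zakTerm, mul_zero, AddChar.map_zero_eq_one, Circle.coe_one, mul_one, hcoeff] at hsum
  simp only [zakSum, zakTerm, hcoeff]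
  exact tsum_fourierCoeffOn_zero_one (hF.continuous_slice x) (hF.periodic_snd x) hsum y

theorem existsUnique_zakSum_eq (hn : n ≠ 0) (hF : IsTwistedPeriodic n F) :
    ∃! g : ℤ → 𝓢(ℝ, ℂ), Periodic g n ∧ zakSum n g = F := by
  refine ⟨hF.zakTransform hn, ⟨hF.periodic_zakTransform hn, hF.zakSum_zakTransform hn⟩, ?_⟩
  rintro g ⟨hg, rfl⟩
  ext k x
  exact (zakCoeff_zakSum hn hg k x).symm

end IsTwistedPeriodic

end ZakCoeff

section WeightVector

theorem eq_mul_exp_of_hasDerivAt {c : ℂ} {φ : ℝ → ℂ} (hφ : ∀ t, HasDerivAt φ (c * φ t) t) (t : ℝ) :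
    φ t = φ 0 * Complex.exp (c * t) := by
  have hexp (s : ℝ) : HasDerivAt (fun s : ℝ => Complex.exp (-(c * s))) _ s :=
    ((hasDerivAt_id s).ofReal_comp.const_mul c).neg.cexp
  have hprod (s : ℝ) : HasDerivAt (fun s => φ s * Complex.exp (-(c * s))) 0 s :=
    ((hφ s).mul (hexp s)).congr_deriv (by
      simp only [Pi.neg_apply, id_eq, Complex.ofReal_one]
      ring)
  have hconst := is_const_of_deriv_eq_zero (fun s => (hprod s).differentiableAt)
    (fun s => (hprod s).deriv) t 0
  rw [Complex.exp_neg, ← div_eq_mul_inv, div_eq_iff (Complex.exp_ne_zero _)] at hconst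
  simpa using hconst

/-- Membership in the weight space `A_n`, for functions on the Heisenberg nilmanifold written as
functions on `ℝ³` invariant under the lattice generators. -/
structure IsWeightVector (n : ℤ) (f : ℝ × ℝ × ℝ → ℂ) : Prop where
  contDiff : ContDiff ℝ ∞ f
  add_one_fst : ∀ x y t, f (x + 1, y, t + y) = f (x, y, t)
  add_one_snd : ∀ x y t, f (x, y + 1, t) = f (x, y, t)
  add_one_thd : ∀ x y t, f (x, y, t + 1) = f (x, y, t)
  deriv_eq : ∀ x y t, deriv (fun s => f (x, y, s)) t = 2 * π * I * n * f (x, y, t)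

variable {n : ℤ} {F : ℝ × ℝ → ℂ} {f : ℝ × ℝ × ℝ → ℂ}

theorem IsTwistedPeriodic.isWeightVector (hF : IsTwistedPeriodic n F) :
    IsWeightVector n fun p => F (p.1, p.2.1) * 𝐞 (n * p.2.2) where
  contDiff := (hF.contDiff.comp (by fun_prop)).mul (contDiff_fourierChar.comp (by fun_prop))
  add_one_fst x y t := by
    have hchar : (n * (t + y) : ℝ) = n * t + n * y := by ring
    have hinv : (𝐞 (-n * y) * 𝐞 (n * y) : ℂ) = 1 := by
      rw [← Circle.coe_mul, ← AddChar.map_add_eq_mul]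
      simp
    simp only [hF.add_one_fst, hchar, AddChar.map_add_eq_mul, Circle.coe_mul]
    linear_combination F (x, y) * 𝐞 (n * t) * hinv
  add_one_snd x y t := by simp only [hF.add_one_snd]
  add_one_thd x y t := by
    simp only [mul_add, mul_one, AddChar.map_add_eq_mul, fourierChar_intCast]
  deriv_eq x y t := by
    rw [((hasDerivAt_fourierChar_mul n t).const_mul (F (x, y))).deriv]
    push_cast
    ring

namespace IsWeightVector

lemma eq_mul_fourierChar (hf : IsWeightVector n f) (x y t : ℝ) :
    f (x, y, t) = f (x, y, 0) * 𝐞 (n * t) := by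
  have hdiff : Differentiable ℝ fun s => f (x, y, s) :=
    (hf.contDiff.differentiable (by simp)).comp (by fun_prop)
  have h := eq_mul_exp_of_hasDerivAt (fun s => hf.deriv_eq x y s ▸ (hdiff s).hasDerivAt) t
  rw [h, Real.fourierChar_apply]
  push_cast
  ring_nf

theorem isTwistedPeriodic_slice (hf : IsWeightVector n f) :
    IsTwistedPeriodic n fun p => f (p.1, p.2, 0) where
  contDiff := hf.contDiff.comp (by fun_prop)
  add_one_fst x y := by
    have h := hf.add_one_fst x y (-y)
    rw [neg_add_cancel, hf.eq_mul_fourierChar x y (-y), mul_neg, ← neg_mul] at h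
    rw [h, mul_comm]
  add_one_snd x y := hf.add_one_snd x y 0

end IsWeightVector

lemma tsum_mul_exp_eq_zakSum_mul_fourierChar (n : ℤ) (g : ℤ → 𝓢(ℝ, ℂ)) (x y t : ℝ) :
    ∑' k : ℤ, g k (x + k / n) * Complex.exp (2 * π * I * (k * y + n * t)) =
      zakSum n g (x, y) * 𝐞 (n * t) := by
  rw [zakSum, ← tsum_mul_right]
  refine tsum_congr fun k => ?_
  simp only [zakTerm, Real.fourierChar_apply, mul_assoc, ← Complex.exp_add]
  push_cast
  ring_nf

lemma IsWeightVector.eq_tsum_iff (hf : IsWeightVector n f) (g : ℤ → 𝓢(ℝ, ℂ)) :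
    (∀ x y t : ℝ, f (x, y, t) =
      ∑' k : ℤ, g k (x + k / n) * Complex.exp (2 * π * I * (k * y + n * t))) ↔
      zakSum n g = fun p => f (p.1, p.2, 0) := by
  simp only [tsum_mul_exp_eq_zakSum_mul_fourierChar]
  refine ⟨fun h => funext fun p => by simp [h], fun h x y t => ?_⟩
  rw [h, hf.eq_mul_fourierChar]

end WeightVector

end WeilBrezin

open SchwartzMap in
/-- Weil–Brezin–Zak transform: a smooth function on the Heisenberg nilmanifold
`M₃ = H₃(ℤ)\H₃(ℝ)` of weight `n ≠ 0` under `(2πi)^{-1}∂_t` admits a unique expansion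
`f(x,y,t) = Σ_k f̃(x+k/n; k) e^{2πi(ky+nt)}` with `f̃` Schwartz on `ℝ×ℤ/nℤ`
(i.e. `n`-periodic in `k`), and conversely every such Schwartz `f̃` arises this way. -/
theorem stmt7 (n : ℤ) (hn : n ≠ 0) :
    (∀ f : ℝ × ℝ × ℝ → ℂ, ContDiff ℝ (⊤ : ℕ∞) f →
      (∀ x y t : ℝ, f (x + 1, y, t + y) = f (x, y, t)) →
      (∀ x y t : ℝ, f (x, y + 1, t) = f (x, y, t)) →
      (∀ x y t : ℝ, f (x, y, t + 1) = f (x, y, t)) →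
      (∀ x y t : ℝ, deriv (fun s => f (x, y, s)) t =
        2 * Real.pi * Complex.I * n * f (x, y, t)) →
      ∃! g : ℤ → SchwartzMap ℝ ℂ, (∀ k : ℤ, g (k + n) = g k) ∧
        ∀ x y t : ℝ, f (x, y, t) =
          ∑' k : ℤ, g k (x + k / n) * Complex.exp (2 * Real.pi * Complex.I * (k * y + n * t)))
    ∧
    (∀ g : ℤ → SchwartzMap ℝ ℂ, (∀ k : ℤ, g (k + n) = g k) →
      ∃ f : ℝ × ℝ × ℝ → ℂ, ContDiff ℝ (⊤ : ℕ∞) f ∧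
        (∀ x y t : ℝ, f (x + 1, y, t + y) = f (x, y, t)) ∧
        (∀ x y t : ℝ, f (x, y + 1, t) = f (x, y, t)) ∧
        (∀ x y t : ℝ, f (x, y, t + 1) = f (x, y, t)) ∧
        (∀ x y t : ℝ, deriv (fun s => f (x, y, s)) t =
          2 * Real.pi * Complex.I * n * f (x, y, t)) ∧
        ∀ x y t : ℝ, f (x, y, t) =
          ∑' k : ℤ, g k (x + k / n) * Complex.exp (2 * Real.pi * Complex.I * (k * y + n * t))) := by
  constructor
  · intro f hsmooth hx hy ht hderiv
    have hf : WeilBrezin.IsWeightVector n f := ⟨hsmooth, hx, hy, ht, hderiv⟩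
    simp only [hf.eq_tsum_iff]
    exact hf.isTwistedPeriodic_slice.existsUnique_zakSum_eq hn
  · intro g hg
    have hf := (WeilBrezin.isTwistedPeriodic_zakSum hn hg).isWeightVector
    exact ⟨_, hf.contDiff, hf.add_one_fst, hf.add_one_snd, hf.add_one_thd, hf.deriv_eq,
      fun x y t => (WeilBrezin.tsum_mul_exp_eq_zakSum_mul_fourierChar n g x y t).symm⟩
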